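/- Let p = p₁p₂, let D = (I_{p₁} + Δ₁) ⊗ (I_{p₂} + Δ₂) with ‖Δ₁‖_F ≤ r₁ and ‖Δ₂‖_F ≤ r₂, and suppose (r₁ + r₂ + r₁r₂)√s ≤ 0.1. Let x ∈ {−1, 0, 1}^p have at most s nonzero entries, let η ∈ ℝ^p satisfy |η_l| < 0.4 for every l ∈ [p], and set y = D x + η. Then for every l ∈ [p]: y_l > 0.5 if x_l = 1, y_l < −0.5 if x_l = −1, and −0.5 < y_l < 0.5 if x_l = 0; consequently the entrywise thresholding rule x̂_l = 1 if y_l > 0.5, x̂_l = −1 if y_l < −0.5, and x̂_l = 0 otherwise recovers x exactly, i.e., x̂ = x. -/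

import Mathlib

open Matrix Real

noncomputable section

def frobNormSq {m n : Type*} [Fintype m] [Fintype n] (A : Matrix m n ℝ) : ℝ :=
  ∑ i, ∑ j, A i j ^ 2

def frobNorm {m n : Type*} [Fintype m] [Fintype n] (A : Matrix m n ℝ) : ℝ :=
  Real.sqrt (frobNormSq A)

/-!
Expanding the Kronecker product, `(1 + Δ₁) ⊗ (1 + Δ₂) - 1 = Δ₁ ⊗ 1 + 1 ⊗ Δ₂ + Δ₁ ⊗ Δ₂`. The
Euclidean norm of a row of `A ⊗ B` is at most the product of the norms of the corresponding rows of
`A` and `B`, so every row of this difference has norm at most `r₁ + r₂ + r₁ r₂`. By Cauchy–Schwarz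
each entry of `y - x - η` is at most `(r₁ + r₂ + r₁ r₂) ‖x‖₂` in absolute value, where `‖x‖₂ ≤ √s`,
so that `y` stays within `1/2` of `x` entrywise. Only row norms enter, and these are dominated by
the Frobenius norm.
-/

open scoped Kronecker

section RowNorm

variable {l m n p R : Type*} [Fintype m] [Fintype n]

/-- The `ℓ²` norm of the `i`-th row of `A`, as the norm of that row in `PiLp 2`: the plain function
type `m → R` carries the sup norm. It measures the entrywise effect of a matrix on `ℓ²` vectors. -/
def rowNorm [SeminormedAddCommGroup R] (A : Matrix l m R) (i : l) : ℝ :=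
  ‖WithLp.toLp 2 (A i)‖

theorem rowNorm_eq_sqrt [SeminormedAddCommGroup R] (A : Matrix l m R) (i : l) :
    rowNorm A i = √(∑ j, ‖A i j‖ ^ 2) :=
  PiLp.norm_eq_of_L2 _

theorem rowNorm_nonneg [SeminormedAddCommGroup R] (A : Matrix l m R) (i : l) : 0 ≤ rowNorm A i :=
  norm_nonneg _

theorem rowNorm_add_le [SeminormedAddCommGroup R] (A B : Matrix l m R) (i : l) :
    rowNorm (A + B) i ≤ rowNorm A i + rowNorm B i :=
  norm_add_le (WithLp.toLp 2 (A i)) (WithLp.toLp 2 (B i))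

theorem rowNorm_one [DecidableEq m] [SeminormedRing R] [NormOneClass R] (i : m) :
    rowNorm (1 : Matrix m m R) i = 1 := by
  simp [rowNorm_eq_sqrt, Matrix.one_apply, apply_ite]

theorem rowNorm_kronecker_le [NonUnitalSeminormedRing R] (A : Matrix l m R) (B : Matrix p n R)
    (i : l × p) : rowNorm (A ⊗ₖ B) i ≤ rowNorm A i.1 * rowNorm B i.2 := by
  rw [rowNorm_eq_sqrt, rowNorm_eq_sqrt, rowNorm_eq_sqrt, ← Real.sqrt_mul (by positivity),
    Fintype.sum_mul_sum, ← Fintype.sum_prod_type']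
  gcongr with j
  rw [← mul_pow]
  gcongr
  exact norm_mul_le _ _

theorem norm_mulVec_apply_le [NonUnitalSeminormedRing R] (A : Matrix l m R) (x : m → R) (i : l) :
    ‖(A *ᵥ x) i‖ ≤ rowNorm A i * ‖WithLp.toLp 2 x‖ := by
  calc ‖(A *ᵥ x) i‖ ≤ ∑ j, ‖A i j‖ * ‖x j‖ :=
        norm_sum_le_of_le _ fun j _ => norm_mul_le (A i j) (x j)
    _ ≤ √(∑ j, ‖A i j‖ ^ 2) * √(∑ j, ‖x j‖ ^ 2) := Real.sum_mul_le_sqrt_mul_sqrt _ _ _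
    _ = rowNorm A i * ‖WithLp.toLp 2 x‖ := by rw [rowNorm_eq_sqrt, PiLp.norm_eq_of_L2]

theorem rowNorm_le_frobNorm [Fintype l] (A : Matrix l m ℝ) (i : l) :
    rowNorm A i ≤ frobNorm A := by
  simp only [rowNorm_eq_sqrt, Real.norm_eq_abs, sq_abs]
  exact Real.sqrt_le_sqrt <| Finset.single_le_sum (f := fun i => ∑ j, A i j ^ 2)
    (fun i _ => by positivity) (Finset.mem_univ i)

end RowNorm

section Perturbation

variable {m n R : Type*} [DecidableEq m] [DecidableEq n]

theorem one_add_kronecker_one_add [NonAssocSemiring R] (A : Matrix m m R) (B : Matrix n n R) :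
    (1 + A) ⊗ₖ (1 + B) = 1 + (A ⊗ₖ 1 + 1 ⊗ₖ B + A ⊗ₖ B) := by
  rw [Matrix.add_kronecker, Matrix.kronecker_add, Matrix.kronecker_add, Matrix.one_kronecker_one]
  abel

variable [Fintype m] [Fintype n] [SeminormedRing R] [NormOneClass R]

theorem rowNorm_kronecker_perturbation_le (A : Matrix m m R) (B : Matrix n n R) (i : m × n) :
    rowNorm (A ⊗ₖ 1 + 1 ⊗ₖ B + A ⊗ₖ B) i
      ≤ rowNorm A i.1 + rowNorm B i.2 + rowNorm A i.1 * rowNorm B i.2 := by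
  have left_le : rowNorm (A ⊗ₖ (1 : Matrix n n R)) i ≤ rowNorm A i.1 := by
    simpa only [rowNorm_one, mul_one] using rowNorm_kronecker_le A (1 : Matrix n n R) i
  have right_le : rowNorm ((1 : Matrix m m R) ⊗ₖ B) i ≤ rowNorm B i.2 := by
    simpa only [rowNorm_one, one_mul] using rowNorm_kronecker_le (1 : Matrix m m R) B i
  calc rowNorm (A ⊗ₖ 1 + 1 ⊗ₖ B + A ⊗ₖ B) i
      ≤ rowNorm (A ⊗ₖ 1) i + rowNorm (1 ⊗ₖ B) i + rowNorm (A ⊗ₖ B) i :=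
        (rowNorm_add_le _ _ i).trans (by gcongr; exact rowNorm_add_le _ _ i)
    _ ≤ rowNorm A i.1 + rowNorm B i.2 + rowNorm A i.1 * rowNorm B i.2 := by
        gcongr
        exact rowNorm_kronecker_le A B i

theorem norm_one_add_kronecker_one_add_mulVec_sub_le (A : Matrix m m R) (B : Matrix n n R)
    (x : m × n → R) (i : m × n) :
    ‖(((1 + A) ⊗ₖ (1 + B)) *ᵥ x) i - x i‖
      ≤ (rowNorm A i.1 + rowNorm B i.2 + rowNorm A i.1 * rowNorm B i.2) *
        ‖WithLp.toLp 2 x‖ := by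
  rw [one_add_kronecker_one_add, Matrix.add_mulVec, Matrix.one_mulVec, Pi.add_apply,
    add_sub_cancel_left]
  refine (norm_mulVec_apply_le _ x i).trans ?_
  gcongr
  exact rowNorm_kronecker_perturbation_le A B i

end Perturbation

theorem norm_toLp_le_sqrt_card_support {ι E : Type*} [Fintype ι] [SeminormedAddCommGroup E]
    [DecidableEq E] {x : ι → E} (hx : ∀ i, ‖x i‖ ≤ 1) :
    ‖WithLp.toLp 2 x‖ ≤ √(Finset.univ.filter fun i => x i ≠ 0).card := by
  rw [PiLp.norm_eq_of_L2, Finset.card_filter, Nat.cast_sum]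
  gcongr with i
  by_cases hi : x i = 0
  · simp [hi]
  · simpa [hi] using hx i

section Threshold

/-- The entrywise thresholding rule `y ↦ x̂`, rounding a real number to `{-1, 0, 1}`; the
thresholds `±0.5` themselves are sent to `0`. -/
def ternaryThreshold (y : ℝ) : ℝ :=
  if 0.5 < y then 1 else if y < -0.5 then -1 else 0

variable {t y : ℝ}

theorem threshold_bounds_of_abs_sub_lt (h : |y - t| < 0.5) :
    (t = 1 → 0.5 < y) ∧ (t = -1 → y < -0.5) ∧ (t = 0 → -0.5 < y ∧ y < 0.5) := by
  obtain ⟨lower, upper⟩ := abs_lt.1 h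
  refine ⟨?_, ?_, ?_⟩
  · rintro rfl; linarith
  · rintro rfl; linarith
  · rintro rfl; constructor <;> linarith

theorem ternaryThreshold_eq_of_abs_sub_lt (ht : t = 1 ∨ t = -1 ∨ t = 0) (h : |y - t| < 0.5) :
    ternaryThreshold y = t := by
  obtain ⟨of_one, of_neg_one, of_zero⟩ := threshold_bounds_of_abs_sub_lt h
  rcases ht with rfl | rfl | rfl
  · exact if_pos (of_one rfl)
  · have y_lt := of_neg_one rfl
    exact (if_neg (by linarith)).trans (if_pos y_lt)
  · obtain ⟨lt_y, y_lt⟩ := of_zero rfl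
    exact (if_neg y_lt.not_gt).trans (if_neg lt_y.not_gt)

end Threshold

theorem thresholding_recovers_sparse_coefficients_general {m n : Type*} [Fintype m] [Fintype n]
    [DecidableEq m] [DecidableEq n] {s : ℕ} {r₁ r₂ : ℝ} {Δ₁ : Matrix m m ℝ} {Δ₂ : Matrix n n ℝ}
    (h₁ : ∀ i, rowNorm Δ₁ i ≤ r₁) (h₂ : ∀ j, rowNorm Δ₂ j ≤ r₂)
    {x : m × n → ℝ} (hx : ∀ l, x l = 1 ∨ x l = -1 ∨ x l = 0)
    (hxs : (Finset.univ.filter fun l => x l ≠ 0).card ≤ s)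
    {η : m × n → ℝ} (hη : ∀ l, (r₁ + r₂ + r₁ * r₂) * √s + |η l| < 0.5)
    {y : m × n → ℝ} (hy : y = ((1 + Δ₁) ⊗ₖ (1 + Δ₂)) *ᵥ x + η) :
    (∀ l, (x l = 1 → 0.5 < y l) ∧ (x l = -1 → y l < -0.5) ∧
      (x l = 0 → -0.5 < y l ∧ y l < 0.5)) ∧
    (fun l => ternaryThreshold (y l)) = x := by
  have abs_x_le (l) : |x l| ≤ 1 := by rcases hx l with h | h | h <;> simp [h]
  have norm_x_le : ‖WithLp.toLp 2 x‖ ≤ √s :=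
    (norm_toLp_le_sqrt_card_support abs_x_le).trans (by gcongr)
  have abs_y_sub_x_lt (l) : |y l - x l| < 0.5 := by
    have row₁_le := h₁ l.1
    have row₂_le := h₂ l.2
    have row₁_nonneg := rowNorm_nonneg Δ₁ l.1
    have row₂_nonneg := rowNorm_nonneg Δ₂ l.2
    have r₁_nonneg := row₁_nonneg.trans row₁_le
    have r₂_nonneg := row₂_nonneg.trans row₂_le
    calc |y l - x l| = |((((1 + Δ₁) ⊗ₖ (1 + Δ₂)) *ᵥ x) l - x l) + η l| := by
          rw [hy, Pi.add_apply, add_sub_right_comm]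
      _ ≤ (rowNorm Δ₁ l.1 + rowNorm Δ₂ l.2 + rowNorm Δ₁ l.1 * rowNorm Δ₂ l.2) *
            ‖WithLp.toLp 2 x‖ + |η l| :=
          (abs_add_le _ _).trans
            (by gcongr; exact norm_one_add_kronecker_one_add_mulVec_sub_le Δ₁ Δ₂ x l)
      _ ≤ (r₁ + r₂ + r₁ * r₂) * √s + |η l| := by gcongr
      _ < 0.5 := hη l
  exact ⟨fun l => threshold_bounds_of_abs_sub_lt (abs_y_sub_x_lt l),
    funext fun l => ternaryThreshold_eq_of_abs_sub_lt (hx l) (abs_y_sub_x_lt l)⟩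

/-- **Exact recovery of sparse ternary coefficients by thresholding**: if
`(r₁ + r₂ + r₁r₂)√s ≤ 0.1` and the noise entries satisfy `|η_l| < 0.4`, then for
`y = ((I + Δ₁) ⊗ (I + Δ₂)) x + η` the entries of `y` lie on the correct side of the
thresholds `±0.5`, and entrywise thresholding recovers `x` exactly. -/
theorem thresholding_recovers_sparse_coefficients
    (p₁ p₂ s : ℕ) (r₁ r₂ : ℝ)
    (Δ₁ : Matrix (Fin p₁) (Fin p₁) ℝ) (Δ₂ : Matrix (Fin p₂) (Fin p₂) ℝ)
    (h₁ : frobNorm Δ₁ ≤ r₁) (h₂ : frobNorm Δ₂ ≤ r₂)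
    (hsmall : (r₁ + r₂ + r₁ * r₂) * Real.sqrt (s : ℝ) ≤ 0.1)
    (x : Fin p₁ × Fin p₂ → ℝ) (hx : ∀ l, x l = 1 ∨ x l = -1 ∨ x l = 0)
    (hxs : (Finset.univ.filter fun l => x l ≠ 0).card ≤ s)
    (η : Fin p₁ × Fin p₂ → ℝ) (hη : ∀ l, |η l| < 0.4)
    (y : Fin p₁ × Fin p₂ → ℝ)
    (hy : y = (Matrix.kroneckerMap (· * ·) (1 + Δ₁) (1 + Δ₂)).mulVec x + η) :
    (∀ l, (x l = 1 → 0.5 < y l) ∧ (x l = -1 → y l < -0.5) ∧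
      (x l = 0 → -0.5 < y l ∧ y l < 0.5)) ∧
    (fun l => if 0.5 < y l then (1 : ℝ) else if y l < -0.5 then -1 else 0) = x :=
  thresholding_recovers_sparse_coefficients_general (fun i => (rowNorm_le_frobNorm Δ₁ i).trans h₁)
    (fun j => (rowNorm_le_frobNorm Δ₂ j).trans h₂) hx hxs (fun l => by linarith [hη l]) hy

end
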